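/- Let T = {(x₁,x₂) ∈ ℝ² : x₁ > 0, x₂ > 0, x₁ + x₂ < 1}, α, β, γ > −1, ρ(x₁,x₂) = x₁^α x₂^β (1−x₁−x₂)^γ, and Φ(x₁,x₂) = [[x₁(1−x₁), −x₁x₂], [−x₁x₂, x₂(1−x₂)]]. For every f ∈ L²(T,ρ) there exists a unique (up to a.e. equality) u ∈ W(T,ρ,ρΦ) such that for all v ∈ W(T,ρ,ρΦ), ∫_T (∇v)ᵗ ρΦ ∇u dx₁dx₂ + ∫_T (2+x₁²+x₂²) u v ρ dx₁dx₂ = ∫_T v f ρ dx₁dx₂. -/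

import Mathlib

open MeasureTheory Filter

noncomputable section

abbrev Poly2 := MvPolynomial (Fin 2) ℝ

/-- Evaluation of a two-variable real polynomial at a point of `ℝ × ℝ`. -/
def pev (p : Poly2) (x : ℝ × ℝ) : ℝ := MvPolynomial.eval ![x.1, x.2] p

/-- `uᵗ Φ v` where `Φ` is the matrix with polynomial entries `p11 p12 p21 p22`. -/
def bilPhi (p11 p12 p21 p22 : Poly2) (x u v : ℝ × ℝ) : ℝ :=
  u.1 * (pev p11 x * v.1 + pev p12 x * v.2) + u.2 * (pev p21 x * v.1 + pev p22 x * v.2)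

/-- The (classical) gradient of a two-variable polynomial. -/
def polyGrad (p : Poly2) (x : ℝ × ℝ) : ℝ × ℝ :=
  (pev (MvPolynomial.pderiv (0 : Fin 2) p) x, pev (MvPolynomial.pderiv (1 : Fin 2) p) x)

/-- `ρ` is a weight function on `Ω`. -/
def IsWeight (Ω : Set (ℝ × ℝ)) (ρ : ℝ × ℝ → ℝ) : Prop :=
  Measurable ρ ∧ (∀ᵐ x ∂(volume.restrict Ω), 0 < ρ x) ∧ IntegrableOn ρ Ω

/-- `ρ` is a moment weight function on `Ω`. -/
def IsMomentWeight (Ω : Set (ℝ × ℝ)) (ρ : ℝ × ℝ → ℝ) : Prop :=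
  Measurable ρ ∧ (∀ᵐ x ∂(volume.restrict Ω), 0 < ρ x) ∧
    ∀ m n : ℕ, IntegrableOn (fun x : ℝ × ℝ => |x.1| ^ m * |x.2| ^ n * ρ x) Ω

/-- `Φ` is symmetric and positive definite at every point of `Ω`. -/
def SymPosDef (Ω : Set (ℝ × ℝ)) (p11 p12 p21 p22 : Poly2) : Prop :=
  p12 = p21 ∧ ∀ x ∈ Ω, ∀ ζ : ℝ × ℝ, ζ ≠ 0 → 0 < bilPhi p11 p12 p21 p22 x ζ ζ

/-- `Φ` is symmetric, has entries of degree at most 2, and is positive definite on `Ω`. -/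
def GoodPhi (Ω : Set (ℝ × ℝ)) (p11 p12 p21 p22 : Poly2) : Prop :=
  SymPosDef Ω p11 p12 p21 p22 ∧ p11.totalDegree ≤ 2 ∧ p12.totalDegree ≤ 2 ∧
    p21.totalDegree ≤ 2 ∧ p22.totalDegree ≤ 2

/-- The Pearson equation `div(ρΦ) = ρ(ψ₁,ψ₂)` with explicit degree-one polynomials
`ψⱼ(x) = d_{j1} x₁ + d_{j2} x₂ + e_j` having linearly independent linear parts. -/
def PearsonWith (Ω : Set (ℝ × ℝ)) (ρ : ℝ × ℝ → ℝ) (p11 p12 p21 p22 : Poly2)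
    (d11 d12 d21 d22 e1 e2 : ℝ) : Prop :=
  ContDiffOn ℝ 1 ρ Ω ∧ d11 * d22 - d12 * d21 ≠ 0 ∧
    (∀ x ∈ Ω,
      fderiv ℝ (fun y => ρ y * pev p11 y) x (1, 0) +
        fderiv ℝ (fun y => ρ y * pev p21 y) x (0, 1) = ρ x * (d11 * x.1 + d12 * x.2 + e1)) ∧
    (∀ x ∈ Ω,
      fderiv ℝ (fun y => ρ y * pev p12 y) x (1, 0) +
        fderiv ℝ (fun y => ρ y * pev p22 y) x (0, 1) = ρ x * (d21 * x.1 + d22 * x.2 + e2))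

/-- The Pearson equation `div(ρΦ) = ρ(ψ₁,ψ₂)` for some admissible `ψ₁, ψ₂`. -/
def Pearson (Ω : Set (ℝ × ℝ)) (ρ : ℝ × ℝ → ℝ) (p11 p12 p21 p22 : Poly2) : Prop :=
  ∃ d11 d12 d21 d22 e1 e2 : ℝ, PearsonWith Ω ρ p11 p12 p21 p22 d11 d12 d21 d22 e1 e2

/-- `div(ρΦv)` for a pair of polynomials `v = (v1, v2)`. -/
def divRhoPhi (ρ : ℝ × ℝ → ℝ) (p11 p12 p21 p22 v1 v2 : Poly2) (x : ℝ × ℝ) : ℝ :=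
  fderiv ℝ (fun y => ρ y * (pev p11 y * pev v1 y + pev p12 y * pev v2 y)) x (1, 0) +
    fderiv ℝ (fun y => ρ y * (pev p21 y * pev v1 y + pev p22 y * pev v2 y)) x (0, 1)

/-- Membership in `L²(Ω, ρ)`. -/
def MemL2 (Ω : Set (ℝ × ℝ)) (ρ : ℝ × ℝ → ℝ) (u : ℝ × ℝ → ℝ) : Prop :=
  Measurable u ∧ IntegrableOn (fun x => u x ^ 2 * ρ x) Ω

/-- Membership in the matrix-weighted Lebesgue space `L²(Ω, ρΦ)`. -/
def MemL2M (Ω : Set (ℝ × ℝ)) (ρ : ℝ × ℝ → ℝ) (p11 p12 p21 p22 : Poly2)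
    (w : ℝ × ℝ → ℝ × ℝ) : Prop :=
  Measurable w ∧ IntegrableOn (fun x => ρ x * bilPhi p11 p12 p21 p22 x (w x) (w x)) Ω

/-- `h` is a weak gradient of `u`. -/
def IsWeakGrad (Ω : Set (ℝ × ℝ)) (ρ : ℝ × ℝ → ℝ) (p11 p12 p21 p22 : Poly2)
    (u : ℝ × ℝ → ℝ) (h : ℝ × ℝ → ℝ × ℝ) : Prop :=
  MemL2M Ω ρ p11 p12 p21 p22 h ∧
    ∀ v1 v2 : Poly2,
      ∫ x in Ω, u x * divRhoPhi ρ p11 p12 p21 p22 v1 v2 x =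
        - ∫ x in Ω, ρ x * bilPhi p11 p12 p21 p22 x (h x) (pev v1 x, pev v2 x)

/-- Membership in `W(Ω, ρ, ρΦ)`, the closure of the polynomials in `W^{1,2}(Ω, ρ, ρΦ)`,
for a function `u` with weak gradient `g`. -/
def MemW (Ω : Set (ℝ × ℝ)) (ρ : ℝ × ℝ → ℝ) (p11 p12 p21 p22 : Poly2)
    (u : ℝ × ℝ → ℝ) (g : ℝ × ℝ → ℝ × ℝ) : Prop :=
  MemL2 Ω ρ u ∧ IsWeakGrad Ω ρ p11 p12 p21 p22 u g ∧
    ∀ ε : ℝ, 0 < ε → ∃ q : Poly2,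
      (∫ x in Ω, (u x - pev q x) ^ 2 * ρ x) +
        (∫ x in Ω, ρ x * bilPhi p11 p12 p21 p22 x (g x - polyGrad q x) (g x - polyGrad q x))
          < ε ^ 2

/-- The open triangle with vertices `(0,0)`, `(1,0)`, `(0,1)`. -/
def Ttri : Set (ℝ × ℝ) := {x : ℝ × ℝ | 0 < x.1 ∧ 0 < x.2 ∧ x.1 + x.2 < 1}

/-- The Jacobi-type weight `ρ(x) = x₁^α x₂^β (1−x₁−x₂)^γ`. -/
def rhoT (α β γ : ℝ) (x : ℝ × ℝ) : ℝ :=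
  x.1 ^ α * x.2 ^ β * (1 - x.1 - x.2) ^ γ

/-- The entry `φ₁₁ = x₁(1−x₁)` of the triangle matrix `Φ`. -/
def q11 : Poly2 := MvPolynomial.X 0 * (1 - MvPolynomial.X 0)

/-- The entry `φ₁₂ = φ₂₁ = −x₁x₂` of the triangle matrix `Φ`. -/
def q12 : Poly2 := -(MvPolynomial.X 0 * MvPolynomial.X 1)

/-- The entry `φ₂₂ = x₂(1−x₂)` of the triangle matrix `Φ`. -/
def q22 : Poly2 := MvPolynomial.X 1 * (1 - MvPolynomial.X 1)

/-- The classical gradient of a function of two variables. -/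
def gradF (u : ℝ × ℝ → ℝ) (x : ℝ × ℝ) : ℝ × ℝ :=
  (fderiv ℝ u x (1, 0), fderiv ℝ u x (0, 1))

lemma measT : MeasurableSet Ttri := by
  unfold Ttri
  exact (measurableSet_lt measurable_const measurable_fst).inter
    ((measurableSet_lt measurable_const measurable_snd).inter
      (measurableSet_lt (measurable_fst.add measurable_snd) measurable_const))

def sig : (ℝ × ℝ) ≃ᵐ (ℝ × ℝ) where
  toFun x := (x.1, 1 - x.1 - x.2)
  invFun x := (x.1, 1 - x.1 - x.2)
  left_inv x := by ext <;> simp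
  right_inv x := by ext <;> simp
  measurable_toFun := by simp only [Equiv.coe_fn_mk]; fun_prop
  measurable_invFun := by simp only [Equiv.coe_fn_symm_mk]; fun_prop

lemma sig_apply (x : ℝ × ℝ) : sig x = (x.1, 1 - x.1 - x.2) := rfl

lemma sig_mp : MeasurePreserving sig (volume : Measure (ℝ × ℝ)) volume := by
  have := MeasurePreserving.skew_product (μa := (volume : Measure ℝ)) (μb := (volume : Measure ℝ))
    (μc := (volume : Measure ℝ)) (μd := (volume : Measure ℝ)) (f := id) (MeasurePreserving.id _)
    (g := fun a b => 1 - a - b) (by unfold Function.uncurry; fun_prop)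
    (Filter.Eventually.of_forall fun a => (Measure.measurePreserving_sub_left volume (1 - a)).map_eq)
  exact this

lemma swap_mp : MeasurePreserving (MeasurableEquiv.prodComm : (ℝ × ℝ) ≃ᵐ (ℝ × ℝ))
    (volume : Measure (ℝ × ℝ)) volume := Measure.measurePreserving_swap

lemma sig_T : sig ⁻¹' Ttri = Ttri := by
  ext x
  simp only [Ttri, Set.mem_preimage, Set.mem_ofPred_eq, sig_apply]
  constructor <;> rintro ⟨h1, h2, h3⟩ <;> refine ⟨?_, ?_, ?_⟩ <;> linarith

lemma swap_T : (MeasurableEquiv.prodComm : (ℝ × ℝ) ≃ᵐ (ℝ × ℝ)) ⁻¹' Ttri = Ttri := by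
  ext x
  simp only [Ttri, Set.mem_preimage, Set.mem_ofPred_eq, MeasurableEquiv.prodComm, MeasurableEquiv.coe_mk,
    Equiv.prodComm_apply, Prod.fst_swap, Prod.snd_swap]
  constructor <;> rintro ⟨h1, h2, h3⟩ <;> refine ⟨?_, ?_, ?_⟩ <;> linarith

lemma integrableOn_sig {F : ℝ × ℝ → ℝ} (h : IntegrableOn F Ttri) :
    IntegrableOn (fun x : ℝ × ℝ => F (x.1, 1 - x.1 - x.2)) Ttri := by
  have := (sig_mp.integrableOn_comp_preimage sig.measurableEmbedding (f := F) (s := Ttri)).2 h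
  rwa [sig_T] at this

lemma integrableOn_swap {F : ℝ × ℝ → ℝ} (h : IntegrableOn F Ttri) :
    IntegrableOn (fun x : ℝ × ℝ => F (x.2, x.1)) Ttri := by
  have := (swap_mp.integrableOn_comp_preimage (MeasurableEquiv.measurableEmbedding _) (f := F) (s := Ttri)).2 h
  rwa [swap_T] at this

lemma integral_sig (F : ℝ × ℝ → ℝ) :
    ∫ x in Ttri, F (x.1, 1 - x.1 - x.2) = ∫ x in Ttri, F x := by
  have := sig_mp.setIntegral_preimage_emb sig.measurableEmbedding F Ttri
  rwa [sig_T] at this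

lemma integral_swap (F : ℝ × ℝ → ℝ) :
    ∫ x in Ttri, F (x.2, x.1) = ∫ x in Ttri, F x := by
  have := swap_mp.setIntegral_preimage_emb (MeasurableEquiv.measurableEmbedding _) F Ttri
  rwa [swap_T] at this

lemma rho_meas (α β γ : ℝ) : Measurable (rhoT α β γ) := by
  unfold rhoT; fun_prop

lemma rho_pos (α β γ : ℝ) {x : ℝ × ℝ} (hx : x ∈ Ttri) : 0 < rhoT α β γ x := by
  obtain ⟨h1, h2, h3⟩ := hx
  have : 0 < 1 - x.1 - x.2 := by linarith
  unfold rhoT; positivity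

lemma int_xy {α β : ℝ} (hα : -1 < α) (hβ : -1 < β) :
    IntegrableOn (fun x : ℝ × ℝ => x.1 ^ α * x.2 ^ β) Ttri := by
  have h1 : ∀ {a : ℝ}, -1 < a → IntegrableOn (fun x : ℝ => x ^ a) (Set.Ioc 0 1) := fun {a} ha =>
    (intervalIntegrable_iff_integrableOn_Ioc_of_le zero_le_one).1 (intervalIntegral.intervalIntegrable_rpow' ha)
  have h2 := Integrable.mul_prod (h1 hα) (h1 hβ)
  rw [Measure.prod_restrict] at h2
  refine IntegrableOn.mono_set (t := Set.Ioc (0:ℝ) 1 ×ˢ Set.Ioc (0:ℝ) 1) h2 ?_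
  rintro x ⟨h1, h2, h3⟩
  exact ⟨⟨h1, by linarith⟩, ⟨h2, by linarith⟩⟩

lemma rpow_bd (a : ℝ) {t : ℝ} (h1 : 1/3 ≤ t) (h2 : t ≤ 1) : t ^ a ≤ 1 + (1/3 : ℝ) ^ a := by
  have h3 : 0 ≤ (1/3 : ℝ) ^ a := by positivity
  rcases le_total 0 a with h | h
  · have := Real.rpow_le_one (by linarith : 0 ≤ t) h2 h
    linarith
  · have := Real.rpow_le_rpow_of_nonpos (by norm_num : (0:ℝ) < 1/3) h1 h
    linarith

lemma rho_int {α β γ : ℝ} (hα : -1 < α) (hβ : -1 < β) (hγ : -1 < γ) :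
    IntegrableOn (rhoT α β γ) Ttri := by
  have e3 := int_xy hα hβ
  have e2 := integrableOn_sig (int_xy hα hγ)
  have e1 := integrableOn_swap (integrableOn_sig (int_xy hβ hγ))
  have E := ((e3.const_mul (1 + (1/3 : ℝ) ^ γ)).add (e2.const_mul (1 + (1/3 : ℝ) ^ β))).add
    (e1.const_mul (1 + (1/3 : ℝ) ^ α))
  refine Integrable.mono' E (rho_meas α β γ).aestronglyMeasurable ?_
  refine (ae_restrict_mem measT).mono fun x hx => ?_
  rw [Real.norm_of_nonneg (rho_pos α β γ hx).le]
  obtain ⟨h1, h2, h3⟩ := hx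
  have h3 : 0 < 1 - x.1 - x.2 := by linarith
  simp only [Pi.add_apply, rhoT]
  rw [show 1 - x.2 - x.1 = 1 - x.1 - x.2 by ring]
  have pa : 0 < x.1 ^ α := by positivity
  have pb : 0 < x.2 ^ β := by positivity
  have pc : 0 < (1 - x.1 - x.2) ^ γ := by positivity
  have qa : 0 < (1/3 : ℝ) ^ α := by positivity
  have qb : 0 < (1/3 : ℝ) ^ β := by positivity
  have qc : 0 < (1/3 : ℝ) ^ γ := by positivity
  have T1 : 0 ≤ (1 + (1/3 : ℝ) ^ γ) * (x.1 ^ α * x.2 ^ β) := by positivity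
  have T2 : 0 ≤ (1 + (1/3 : ℝ) ^ β) * (x.1 ^ α * (1 - x.1 - x.2) ^ γ) := by positivity
  have T3 : 0 ≤ (1 + (1/3 : ℝ) ^ α) * (x.2 ^ β * (1 - x.1 - x.2) ^ γ) := by positivity
  by_cases c1 : 1/3 ≤ x.1
  · have := mul_le_mul_of_nonneg_right (rpow_bd α c1 (by linarith)) (mul_pos pb pc).le
    linarith
  by_cases c2 : 1/3 ≤ x.2
  · have := mul_le_mul_of_nonneg_right (rpow_bd β c2 (by linarith)) (mul_pos pa pc).le
    linarith
  · have := mul_le_mul_of_nonneg_right (rpow_bd γ (t := 1 - x.1 - x.2) (by linarith) (by linarith)) (mul_pos pa pb).le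
    linarith

lemma cont_bd {P : ℝ × ℝ → ℝ} (hP : Continuous P) : ∃ C, ∀ x ∈ Ttri, |P x| ≤ C := by
  obtain ⟨C, hC⟩ := (isCompact_Icc (a := (0:ℝ)) (b := 1)).prod (isCompact_Icc (a := (0:ℝ)) (b := 1))
    |>.exists_bound_of_continuousOn hP.continuousOn
  refine ⟨C, fun x hx => ?_⟩
  obtain ⟨h1, h2, h3⟩ := hx
  exact hC x ⟨⟨h1.le, by linarith⟩, ⟨h2.le, by linarith⟩⟩

lemma rho_cont_int {α β γ : ℝ} (hα : -1 < α) (hβ : -1 < β) (hγ : -1 < γ) {P : ℝ × ℝ → ℝ}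
    (hP : Continuous P) : IntegrableOn (fun x => rhoT α β γ x * P x) Ttri := by
  obtain ⟨C, hC⟩ := cont_bd hP
  refine Integrable.mul_bdd (c := C) (rho_int hα hβ hγ) hP.aestronglyMeasurable ?_
  exact (ae_restrict_mem measT).mono fun x hx => hC x hx

/-- the divergence lemma in direction 1 -/
lemma div1 {α β γ : ℝ} (hα : -1 < α) (hβ : -1 < β) (hγ : -1 < γ) {w w' : ℝ × ℝ → ℝ}
    (hw : Continuous w) (hw' : Continuous w')
    (hd : ∀ x y, HasDerivAt (fun t => w (t, y)) (w' (x, y)) x) :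
    ∫ x in Ttri, rhoT α β γ x * ((α + 1) * (1 - x.1 - x.2) * w x - (γ + 1) * x.1 * w x
      + x.1 * (1 - x.1 - x.2) * w' x) = 0 := by
  have hI := rho_cont_int hα hβ hγ (P := fun x => (α + 1) * (1 - x.1 - x.2) * w x - (γ + 1) * x.1 * w x
      + x.1 * (1 - x.1 - x.2) * w' x) (by fun_prop)
  set D : ℝ × ℝ → ℝ := fun x => rhoT α β γ x * ((α + 1) * (1 - x.1 - x.2) * w x - (γ + 1) * x.1 * w x
      + x.1 * (1 - x.1 - x.2) * w' x) with hD
  have hI' := hI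
  rw [← integrable_indicator_iff measT] at hI'
  rw [← integral_indicator measT]
  rw [Measure.volume_eq_prod] at hI' ⊢
  rw [integral_prod_symm _ hI']
  have hs := hI'.prod_left_ae
  apply integral_eq_zero_of_ae
  filter_upwards [hs] with y hy
  simp only [Pi.zero_apply]
  by_cases hy0 : 0 < y ∧ y < 1
  swap
  · have : ∀ x, Ttri.indicator D (x, y) = 0 := by
      intro x
      apply Set.indicator_of_notMem
      rintro ⟨h1, h2, h3⟩
      exact hy0 ⟨h2, by simp at h1 h3; linarith⟩
    simp [this]
  obtain ⟨y0, y1⟩ := hy0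
  have hind : (fun x => Ttri.indicator D (x, y)) = (Set.Ioo 0 (1 - y)).indicator (fun x => D (x, y)) := by
    ext x
    by_cases hx : x ∈ Set.Ioo 0 (1 - y)
    · rw [Set.indicator_of_mem hx, Set.indicator_of_mem]
      exact ⟨hx.1, y0, by have := hx.2; simp; linarith⟩
    · rw [Set.indicator_of_notMem hx, Set.indicator_of_notMem]
      rintro ⟨h1, h2, h3⟩
      exact hx ⟨h1, by simp at h3; linarith⟩
  rw [hind] at hy ⊢
  rw [integrable_indicator_iff measurableSet_Ioo] at hy
  rw [integral_indicator measurableSet_Ioo, ← integral_Ioc_eq_integral_Ioo,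
    ← intervalIntegral.integral_of_le (by linarith)]
  rw [← integrableOn_Ioc_iff_integrableOn_Ioo] at hy
  rw [intervalIntegral.integral_eq_sub_of_hasDerivAt_of_le (by linarith)
    (f := fun x => x ^ (α + 1) * y ^ β * (1 - x - y) ^ (γ + 1) * w (x, y)) ?_ ?_
    ((intervalIntegrable_iff_integrableOn_Ioc_of_le (by linarith)).2 hy)]
  · rw [Real.zero_rpow (by linarith), show 1 - (1 - y) - y = 0 by ring, Real.zero_rpow (by linarith)]
    simp
  · apply Continuous.continuousOn
    have c1 : Continuous fun x : ℝ => x ^ (α + 1) := Real.continuous_rpow_const (by linarith)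
    have c2 : Continuous fun x : ℝ => (1 - x - y) ^ (γ + 1) :=
      (Real.continuous_rpow_const (by linarith)).comp (by fun_prop : Continuous fun x : ℝ => 1 - x - y)
    fun_prop
  · rintro x ⟨hx0, hx1⟩
    have hz : 0 < 1 - x - y := by linarith
    have d1 := Real.hasDerivAt_rpow_const (x := x) (p := α + 1) (Or.inl hx0.ne')
    have d2 := (((hasDerivAt_id x).const_sub 1).sub_const y).rpow_const (p := γ + 1) (Or.inl hz.ne')
    have := ((d1.mul_const (y ^ β)).mul d2).mul (hd x y)
    refine this.congr_deriv ?_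
    simp only [hD, rhoT, id, add_sub_cancel_right, Pi.mul_apply]
    rw [Real.rpow_add_one hx0.ne', Real.rpow_add_one hz.ne']
    ring_nf

lemma div2 {α β γ : ℝ} (hα : -1 < α) (hβ : -1 < β) (hγ : -1 < γ) {w w' : ℝ × ℝ → ℝ}
    (hw : Continuous w) (hw' : Continuous w')
    (hd : ∀ x y, HasDerivAt (fun t => w (x, t)) (w' (x, y)) y) :
    ∫ x in Ttri, rhoT α β γ x * ((β + 1) * (1 - x.1 - x.2) * w x - (γ + 1) * x.2 * w x
      + x.2 * (1 - x.1 - x.2) * w' x) = 0 := by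
  have := div1 hβ hα hγ (w := fun x => w (x.2, x.1)) (w' := fun x => w' (x.2, x.1))
    (by fun_prop) (by fun_prop) (fun x y => hd y x)
  rw [← this, ← integral_swap]
  congr 1
  ext x
  simp only [rhoT]
  rw [show 1 - x.2 - x.1 = 1 - x.1 - x.2 by ring]
  ring

lemma div3 {α β γ : ℝ} (hα : -1 < α) (hβ : -1 < β) (hγ : -1 < γ) {w w' : ℝ × ℝ → ℝ}
    (hw : Continuous w) (hw' : Continuous w')
    (hd : ∀ x y, HasDerivAt (fun t => w (t, 1 - t - y)) (w' (x, 1 - x - y)) x) :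
    ∫ x in Ttri, rhoT α β γ x * ((α + 1) * x.2 * w x - (β + 1) * x.1 * w x
      + x.1 * x.2 * w' x) = 0 := by
  have := div1 hα hγ hβ (w := fun x => w (x.1, 1 - x.1 - x.2)) (w' := fun x => w' (x.1, 1 - x.1 - x.2))
    (by fun_prop) (by fun_prop) hd
  rw [← this, ← integral_sig]
  congr 1
  ext x
  simp only [rhoT]
  rw [show 1 - x.1 - (1 - x.1 - x.2) = x.2 by ring]
  ring

lemma pev_hasFDerivAt (p : Poly2) (x : ℝ × ℝ) :
    HasFDerivAt (pev p) ((pev (MvPolynomial.pderiv (0 : Fin 2) p) x) • ContinuousLinearMap.fst ℝ ℝ ℝ +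
      (pev (MvPolynomial.pderiv (1 : Fin 2) p) x) • ContinuousLinearMap.snd ℝ ℝ ℝ) x := by
  induction p using MvPolynomial.induction_on with
  | C a =>
    have : pev (MvPolynomial.C a) = fun _ => a := by ext; simp [pev]
    rw [this]
    simpa [pev] using hasFDerivAt_const a x
  | add p q hp hq =>
    have : pev (p + q) = fun x => pev p x + pev q x := by ext; simp [pev]
    rw [this]
    refine (hp.add hq).congr_fderiv ?_
    ext <;> simp [pev]
  | mul_X p i hp =>
    fin_cases i
    · have : pev (p * MvPolynomial.X 0) = fun x => pev p x * x.1 := by ext; simp [pev]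
      simp only [Fin.zero_eta, this]
      refine (hp.mul hasFDerivAt_fst).congr_fderiv ?_
      ext <;> simp [pev]
    · have : pev (p * MvPolynomial.X 1) = fun x => pev p x * x.2 := by ext; simp [pev]
      simp only [Fin.mk_one, this]
      refine (hp.mul hasFDerivAt_snd).congr_fderiv ?_
      ext <;> simp [pev]

lemma pev_cont (p : Poly2) : Continuous (pev p) :=
  continuous_iff_continuousAt.2 fun x => (pev_hasFDerivAt p x).continuousAt

lemma rho_hasFDerivAt (α β γ : ℝ) {x : ℝ × ℝ} (hx : x ∈ Ttri) :
    HasFDerivAt (rhoT α β γ)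
      ((rhoT α β γ x * (α / x.1 - γ / (1 - x.1 - x.2))) • ContinuousLinearMap.fst ℝ ℝ ℝ +
      (rhoT α β γ x * (β / x.2 - γ / (1 - x.1 - x.2))) • ContinuousLinearMap.snd ℝ ℝ ℝ) x := by
  obtain ⟨h1, h2, h3⟩ := hx
  have h3 : 0 < 1 - x.1 - x.2 := by linarith
  have d1 : HasFDerivAt (fun y : ℝ × ℝ => y.1 ^ α) _ x :=
    (hasFDerivAt_fst (𝕜 := ℝ) (p := x)).rpow_const (p := α) (Or.inl h1.ne')
  have d2 : HasFDerivAt (fun y : ℝ × ℝ => y.2 ^ β) _ x :=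
    (hasFDerivAt_snd (𝕜 := ℝ) (p := x)).rpow_const (p := β) (Or.inl h2.ne')
  have d3 : HasFDerivAt (fun y : ℝ × ℝ => (1 - y.1 - y.2) ^ γ) _ x :=
    (((hasFDerivAt_fst (𝕜 := ℝ) (p := x)).const_sub 1).sub (hasFDerivAt_snd (𝕜 := ℝ) (p := x))).rpow_const
      (p := γ) (Or.inl h3.ne')
  have d := (d1.mul d2).mul d3
  refine d.congr_fderiv ?_
  ext
  · simp [rhoT, Real.rpow_sub_one h1.ne', Real.rpow_sub_one h2.ne', Real.rpow_sub_one h3.ne']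
    ring
  · simp [rhoT, Real.rpow_sub_one h1.ne', Real.rpow_sub_one h2.ne', Real.rpow_sub_one h3.ne']
    ring

lemma pev_q11 (x : ℝ × ℝ) : pev q11 x = x.1 * (1 - x.1) := by simp [pev, q11]
lemma pev_q12 (x : ℝ × ℝ) : pev q12 x = -(x.1 * x.2) := by simp [pev, q12]
lemma pev_q22 (x : ℝ × ℝ) : pev q22 x = x.2 * (1 - x.2) := by simp [pev, q22]

lemma pev_mul (p q : Poly2) (x : ℝ × ℝ) : pev (p * q) x = pev p x * pev q x := by simp [pev]
lemma pev_sub (p q : Poly2) (x : ℝ × ℝ) : pev (p - q) x = pev p x - pev q x := by simp [pev]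
lemma pev_add (p q : Poly2) (x : ℝ × ℝ) : pev (p + q) x = pev p x + pev q x := by simp [pev]

def pd0 (p : Poly2) : Poly2 := MvPolynomial.pderiv (0 : Fin 2) p
def pd1 (p : Poly2) : Poly2 := MvPolynomial.pderiv (1 : Fin 2) p

def Pdiv (α β γ : ℝ) (v1 v2 : Poly2) (x : ℝ × ℝ) : ℝ :=
  α * ((1 - x.1) * pev v1 x - x.2 * pev v2 x) + β * (-x.1 * pev v1 x + (1 - x.2) * pev v2 x)
    - γ * (x.1 * pev v1 x + x.2 * pev v2 x)
    + ((1 - 2 * x.1) * pev v1 x + x.1 * (1 - x.1) * pev (pd0 v1) x - x.2 * pev v2 x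
      - x.1 * x.2 * pev (pd0 v2) x)
    + (-x.1 * pev v1 x - x.1 * x.2 * pev (pd1 v1) x + (1 - 2 * x.2) * pev v2 x
      + x.2 * (1 - x.2) * pev (pd1 v2) x)

lemma Pdiv_cont (α β γ : ℝ) (v1 v2 : Poly2) : Continuous (Pdiv α β γ v1 v2) := by
  have := pev_cont
  unfold Pdiv
  fun_prop

lemma div_eq (α β γ : ℝ) (v1 v2 : Poly2) {x : ℝ × ℝ} (hx : x ∈ Ttri) :
    divRhoPhi (rhoT α β γ) q11 q12 q12 q22 v1 v2 x = rhoT α β γ x * Pdiv α β γ v1 v2 x := by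
  have hr := rho_hasFDerivAt α β γ hx
  have h1 := pev_hasFDerivAt v1 x
  have h2 := pev_hasFDerivAt v2 x
  have hf := hasFDerivAt_fst (𝕜 := ℝ) (p := x)
  have hs := hasFDerivAt_snd (𝕜 := ℝ) (p := x)
  have e1 := hr.mul (((hf.mul (hf.const_sub 1)).mul h1).add ((hf.mul hs).neg.mul h2))
  have e2 := hr.mul (((hf.mul hs).neg.mul h1).add ((hs.mul (hs.const_sub 1)).mul h2))
  unfold divRhoPhi
  simp only [pev_q11, pev_q12, pev_q22]
  erw [e1.fderiv, e2.fderiv]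
  obtain ⟨k1, k2, k3⟩ := hx
  have k3 : 0 < 1 - x.1 - x.2 := by linarith
  have := k1.ne'
  have := k2.ne'
  have := k3.ne'
  simp [Pdiv, pd0, pd1]
  field_simp
  ring

lemma bil_eq (x u v : ℝ × ℝ) : bilPhi q11 q12 q12 q22 x u v =
    u.1 * (x.1 * (1 - x.1) * v.1 - x.1 * x.2 * v.2) + u.2 * (-(x.1 * x.2) * v.1 + x.2 * (1 - x.2) * v.2) := by
  simp only [bilPhi, pev_q11, pev_q12, pev_q22]; ring

lemma weak_poly {α β γ : ℝ} (hα : -1 < α) (hβ : -1 < β) (hγ : -1 < γ) (q v1 v2 : Poly2) :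
    ∫ x in Ttri, rhoT α β γ x * (pev q x * Pdiv α β γ v1 v2 x
      + bilPhi q11 q12 q12 q22 x (polyGrad q x) (pev v1 x, pev v2 x)) = 0 := by
  have pc := pev_cont
  have D : ∀ (p : Poly2) (x y : ℝ), HasFDerivAt (pev p) _ (x, y) := fun p x y => pev_hasFDerivAt p (x, y)
  have i1 := div1 hα hβ hγ (w := pev (q * v1)) (w' := pev (pd0 (q * v1))) (pc _) (pc _) (fun x y => by
    have := (D (q * v1) x y).comp_hasDerivAt x ((hasDerivAt_id x).prodMk (hasDerivAt_const x y))
    refine HasDerivAt.congr_deriv this ?_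
    simp [pd0])
  have i2 := div2 hα hβ hγ (w := pev (q * v2)) (w' := pev (pd1 (q * v2))) (pc _) (pc _) (fun x y => by
    have := (D (q * v2) x y).comp_hasDerivAt y ((hasDerivAt_const y x).prodMk (hasDerivAt_id y))
    refine HasDerivAt.congr_deriv this ?_
    simp [pd1])
  have i3 := div3 hα hβ hγ (w := pev (q * (v1 - v2))) (w' := fun x => pev (pd0 (q * (v1 - v2))) x -
      pev (pd1 (q * (v1 - v2))) x) (pc _) (by fun_prop) (fun x y => by
    have := (D (q * (v1 - v2)) x (1 - x - y)).comp_hasDerivAt x ((hasDerivAt_id x).prodMk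
      (((hasDerivAt_id x).const_sub 1).sub_const y))
    refine HasDerivAt.congr_deriv this ?_
    simp [pd1, pd0]; ring)
  have j1 := rho_cont_int hα hβ hγ (P := fun x => (α + 1) * (1 - x.1 - x.2) * pev (q * v1) x - (γ + 1) * x.1 * pev (q * v1) x
      + x.1 * (1 - x.1 - x.2) * pev (pd0 (q * v1)) x) (by fun_prop)
  have j2 := rho_cont_int hα hβ hγ (P := fun x => (β + 1) * (1 - x.1 - x.2) * pev (q * v2) x - (γ + 1) * x.2 * pev (q * v2) x
      + x.2 * (1 - x.1 - x.2) * pev (pd1 (q * v2)) x) (by fun_prop)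
  have j3 := rho_cont_int hα hβ hγ (P := fun x => (α + 1) * x.2 * pev (q * (v1 - v2)) x - (β + 1) * x.1 * pev (q * (v1 - v2)) x
      + x.1 * x.2 * (pev (pd0 (q * (v1 - v2))) x - pev (pd1 (q * (v1 - v2))) x)) (by fun_prop)
  have k := integral_add (j1.add j2) j3
  have k' := integral_add j1 j2
  simp only [Pi.add_apply] at k k'
  rw [k', i1, i2, i3] at k
  simp only [add_zero] at k
  rw [← k]
  congr 1
  ext x
  have l0 : ∀ p r : Poly2, pev (pd0 (p * r)) x = pev p x * pev (pd0 r) x + pev r x * pev (pd0 p) x := by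
    intro p r; simp [pd0, pev]
  have l1 : ∀ p r : Poly2, pev (pd1 (p * r)) x = pev p x * pev (pd1 r) x + pev r x * pev (pd1 p) x := by
    intro p r; simp [pd1, pev]
  have m0 : ∀ p r : Poly2, pev (pd0 (p - r)) x = pev (pd0 p) x - pev (pd0 r) x := by
    intro p r; simp [pd0, pev]
  have m1 : ∀ p r : Poly2, pev (pd1 (p - r)) x = pev (pd1 p) x - pev (pd1 r) x := by
    intro p r; simp [pd1, pev]
  simp only [l0, l1, m0, m1, pev_mul, pev_sub, bil_eq, polyGrad, Pdiv]
  simp only [← pd0.eq_1, ← pd1.eq_1]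
  ring

abbrev E3 := EuclideanSpace ℝ (Fin 3)

def wt (x : ℝ × ℝ) : ℝ := 2 + x.1 ^ 2 + x.2 ^ 2

def emb (ρ : ℝ × ℝ → ℝ) (u : ℝ × ℝ → ℝ) (g : ℝ × ℝ → ℝ × ℝ) (x : ℝ × ℝ) : E3 :=
  WithLp.toLp 2 ![√(ρ x) * (√(wt x) * u x),
    √(ρ x) * (√(x.1 * (1 - x.1)) * ((g x).1 - x.2 / (1 - x.1) * (g x).2)),
    √(ρ x) * (√(x.2 * (1 - x.1 - x.2) / (1 - x.1)) * (g x).2)]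

lemma wt_pos (x : ℝ × ℝ) : 0 < wt x := by unfold wt; positivity

lemma emb_meas {ρ u : ℝ × ℝ → ℝ} {g : ℝ × ℝ → ℝ × ℝ} (hρ : Measurable ρ) (hu : Measurable u)
    (hg : Measurable g) : Measurable (emb ρ u g) := by
  unfold emb wt
  refine (WithLp.measurable_toLp 2 _).comp (measurable_pi_iff.2 fun i => ?_)
  have := hg.fst
  have := hg.snd
  fin_cases i <;> simp <;> fun_prop

lemma inner_emb {α β γ : ℝ} (u v : ℝ × ℝ → ℝ) (g h : ℝ × ℝ → ℝ × ℝ) {x : ℝ × ℝ} (hx : x ∈ Ttri) :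
    inner ℝ (emb (rhoT α β γ) u g x) (emb (rhoT α β γ) v h x) =
      rhoT α β γ x * bilPhi q11 q12 q12 q22 x (h x) (g x) + wt x * u x * v x * rhoT α β γ x := by
  have hr := rho_pos α β γ hx
  obtain ⟨h1, h2, h3⟩ := hx
  have h3 : 0 < 1 - x.1 - x.2 := by linarith
  have h4 : 0 < 1 - x.1 := by linarith
  have s0 := Real.sq_sqrt hr.le
  have s1 := Real.sq_sqrt (wt_pos x).le
  have s2 := Real.sq_sqrt (mul_pos h1 h4).le
  have s3 := Real.sq_sqrt (div_pos (mul_pos h2 h3) h4).le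
  simp only [PiLp.inner_apply, Fin.sum_univ_three, emb, Matrix.cons_val, RCLike.inner_apply,
    conj_trivial, bil_eq]
  generalize √(rhoT α β γ x) = r at *
  generalize √(wt x) = w at *
  generalize √(x.1 * (1 - x.1)) = a at *
  generalize √(x.2 * (1 - x.1 - x.2) / (1 - x.1)) = b at *
  generalize rhoT α β γ x = R at *
  generalize wt x = W at *
  trans r ^ 2 * (w ^ 2 * u x * v x + a ^ 2 * (((g x).1 - x.2 / (1 - x.1) * (g x).2)
    * ((h x).1 - x.2 / (1 - x.1) * (h x).2)) + b ^ 2 * ((g x).2 * (h x).2))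
  · ring
  rw [s0, s1, s2, s3]
  field_simp
  ring

lemma emb_add (ρ u v : ℝ × ℝ → ℝ) (g h : ℝ × ℝ → ℝ × ℝ) (x : ℝ × ℝ) :
    emb ρ (fun x => u x + v x) (fun x => g x + h x) x = emb ρ u g x + emb ρ v h x := by
  ext i; fin_cases i <;> simp [emb] <;> ring

lemma emb_sub (ρ u v : ℝ × ℝ → ℝ) (g h : ℝ × ℝ → ℝ × ℝ) (x : ℝ × ℝ) :
    emb ρ (fun x => u x - v x) (fun x => g x - h x) x = emb ρ u g x - emb ρ v h x := by
  ext i; fin_cases i <;> simp [emb] <;> ring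

lemma emb_smul (ρ u : ℝ × ℝ → ℝ) (g : ℝ × ℝ → ℝ × ℝ) (c : ℝ) (x : ℝ × ℝ) :
    emb ρ (fun x => c * u x) (fun x => c • g x) x = c • emb ρ u g x := by
  ext i; fin_cases i <;> simp [emb] <;> ring

lemma bil_nonneg {x : ℝ × ℝ} (hx : x ∈ Ttri) (g : ℝ × ℝ) : 0 ≤ bilPhi q11 q12 q12 q22 x g g := by
  obtain ⟨h1, h2, h3⟩ := hx
  have h3 : 0 < 1 - x.1 - x.2 := by linarith
  have : bilPhi q11 q12 q12 q22 x g g = x.1 * (1 - x.1 - x.2) * g.1 ^ 2 + x.2 * (1 - x.1 - x.2) * g.2 ^ 2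
      + x.1 * x.2 * (g.1 - g.2) ^ 2 := by rw [bil_eq]; ring
  rw [this]; positivity

lemma bil_meas {g h : ℝ × ℝ → ℝ × ℝ} (hg : Measurable g) (hh : Measurable h) :
    Measurable (fun x => bilPhi q11 q12 q12 q22 x (g x) (h x)) := by
  simp only [bil_eq]
  have := hg.fst
  have := hg.snd
  have := hh.fst
  have := hh.snd
  fun_prop

lemma wt_le {x : ℝ × ℝ} (hx : x ∈ Ttri) : wt x ≤ 4 := by
  obtain ⟨h1, h2, h3⟩ := hx
  unfold wt; nlinarith

lemma wt_ge (x : ℝ × ℝ) : 1 ≤ wt x := by unfold wt; nlinarith [sq_nonneg x.1, sq_nonneg x.2]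

lemma wt_cont : Continuous wt := by unfold wt; fun_prop

section
variable {α β γ : ℝ}

def Good (α β γ : ℝ) (u : ℝ × ℝ → ℝ) (g : ℝ × ℝ → ℝ × ℝ) : Prop :=
  Measurable u ∧ Measurable g ∧ MemLp (emb (rhoT α β γ) u g) 2 (volume.restrict Ttri)

lemma norm_sq_emb (u : ℝ × ℝ → ℝ) (g : ℝ × ℝ → ℝ × ℝ) {x : ℝ × ℝ} (hx : x ∈ Ttri) :
    ‖emb (rhoT α β γ) u g x‖ ^ 2 =
      rhoT α β γ x * bilPhi q11 q12 q12 q22 x (g x) (g x) + wt x * (u x ^ 2 * rhoT α β γ x) := by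
  rw [← real_inner_self_eq_norm_sq, inner_emb u u g g hx]; ring

lemma good_iff (u : ℝ × ℝ → ℝ) (g : ℝ × ℝ → ℝ × ℝ) :
    Good α β γ u g ↔ MemL2 Ttri (rhoT α β γ) u ∧ MemL2M Ttri (rhoT α β γ) q11 q12 q12 q22 g := by
  have hρ := rho_meas α β γ
  constructor
  · rintro ⟨hu, hg, h⟩
    rw [memLp_two_iff_integrable_sq_norm (emb_meas hρ hu hg).aestronglyMeasurable] at h
    refine ⟨⟨hu, ?_⟩, ⟨hg, ?_⟩⟩
    · refine Integrable.mono' h (by fun_prop) ((ae_restrict_mem measT).mono fun x hx => ?_)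
      have hr := rho_pos α β γ hx
      rw [norm_sq_emb u g hx, Real.norm_of_nonneg (by positivity)]
      have := mul_nonneg hr.le (bil_nonneg hx (g x))
      have : u x ^ 2 * rhoT α β γ x ≤ wt x * (u x ^ 2 * rhoT α β γ x) :=
        le_mul_of_one_le_left (by positivity) (wt_ge x)
      linarith
    · have := bil_meas hg hg
      refine Integrable.mono' h (by fun_prop) ((ae_restrict_mem measT).mono fun x hx => ?_)
      have hr := rho_pos α β γ hx
      have := mul_nonneg hr.le (bil_nonneg hx (g x))
      rw [norm_sq_emb u g hx, Real.norm_of_nonneg this]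
      have := wt_pos x
      have : 0 ≤ wt x * (u x ^ 2 * rhoT α β γ x) := by positivity
      linarith
  · rintro ⟨⟨hu, hui⟩, ⟨hg, hgi⟩⟩
    refine ⟨hu, hg, ?_⟩
    rw [memLp_two_iff_integrable_sq_norm (emb_meas hρ hu hg).aestronglyMeasurable]
    have := hgi.add (hui.const_mul 4)
    have mm := emb_meas hρ hu hg
    refine Integrable.mono' this (by fun_prop) ((ae_restrict_mem measT).mono fun x hx => ?_)
    have hr := rho_pos α β γ hx
    rw [Real.norm_of_nonneg (by positivity), norm_sq_emb u g hx]
    simp only [Pi.add_apply]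
    have : wt x * (u x ^ 2 * rhoT α β γ x) ≤ 4 * (u x ^ 2 * rhoT α β γ x) :=
        mul_le_mul_of_nonneg_right (wt_le hx) (by positivity)
    linarith

lemma good_sub {u v : ℝ × ℝ → ℝ} {g h : ℝ × ℝ → ℝ × ℝ} (h1 : Good α β γ u g) (h2 : Good α β γ v h) :
    Good α β γ (fun x => u x - v x) (fun x => g x - h x) := by
  refine ⟨h1.1.sub h2.1, h1.2.1.sub h2.2.1, ?_⟩
  have := h1.2.2.sub h2.2.2
  have e : emb (rhoT α β γ) (fun x => u x - v x) (fun x => g x - h x) =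
      emb (rhoT α β γ) u g - emb (rhoT α β γ) v h := funext fun x => emb_sub _ _ _ _ _ x
  rw [e]
  exact this

lemma good_left {u : ℝ × ℝ → ℝ} {g : ℝ × ℝ → ℝ × ℝ} (h : Good α β γ u g) : Good α β γ u (fun _ => 0) := by
  rw [good_iff] at h ⊢
  refine ⟨h.1, measurable_const, ?_⟩
  simp [bil_eq, IntegrableOn]

lemma good_right {u : ℝ × ℝ → ℝ} {g : ℝ × ℝ → ℝ × ℝ} (h : Good α β γ u g) : Good α β γ (fun _ => 0) g := by
  rw [good_iff] at h ⊢
  refine ⟨⟨measurable_const, ?_⟩, h.2⟩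
  simp [IntegrableOn]

lemma good_inner_int {u v : ℝ × ℝ → ℝ} {g h : ℝ × ℝ → ℝ × ℝ} (h1 : Good α β γ u g) (h2 : Good α β γ v h) :
    IntegrableOn (fun x => rhoT α β γ x * bilPhi q11 q12 q12 q22 x (h x) (g x)
      + wt x * u x * v x * rhoT α β γ x) Ttri := by
  have : Integrable (fun x => inner ℝ (emb (rhoT α β γ) u g x) (emb (rhoT α β γ) v h x)) (volume.restrict Ttri) := by
    have := L2.integrable_inner (𝕜 := ℝ) h1.2.2.toLp h2.2.2.toLp
    refine this.congr ?_
    filter_upwards [h1.2.2.coeFn_toLp, h2.2.2.coeFn_toLp] with x a b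
    rw [a, b]
  refine this.congr ((ae_restrict_mem measT).mono fun x hx => inner_emb u v g h hx)

lemma inner_toLp {u v : ℝ × ℝ → ℝ} {g h : ℝ × ℝ → ℝ × ℝ} (h1 : Good α β γ u g) (h2 : Good α β γ v h) :
    inner ℝ (h1.2.2.toLp) (h2.2.2.toLp) =
      (∫ x in Ttri, rhoT α β γ x * bilPhi q11 q12 q12 q22 x (h x) (g x)) +
      ∫ x in Ttri, wt x * u x * v x * rhoT α β γ x := by
  rw [L2.inner_def, ← integral_add]
  · apply integral_congr_ae
    filter_upwards [h1.2.2.coeFn_toLp, h2.2.2.coeFn_toLp, ae_restrict_mem measT] with x a b hx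
    rw [a, b, inner_emb u v g h hx]
  · have := good_inner_int (good_right h1) (good_right h2)
    simpa [IntegrableOn] using this
  · have := good_inner_int (good_left h1) (good_left h2)
    simpa [bil_eq, IntegrableOn] using this

lemma good_cont (hα : -1 < α) (hβ : -1 < β) (hγ : -1 < γ) {u : ℝ × ℝ → ℝ} {g : ℝ × ℝ → ℝ × ℝ}
    (hu : Continuous u) (hg : Continuous g) : Good α β γ u g := by
  rw [good_iff]
  refine ⟨⟨hu.measurable, ?_⟩, ⟨hg.measurable, ?_⟩⟩
  · simpa [mul_comm] using rho_cont_int hα hβ hγ (hu.pow 2)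
  · refine rho_cont_int hα hβ hγ ?_
    simp only [bil_eq]; fun_prop

lemma good_poly (hα : -1 < α) (hβ : -1 < β) (hγ : -1 < γ) (q : Poly2) :
    Good α β γ (pev q) (polyGrad q) := by
  refine good_cont hα hβ hγ (pev_cont q) ?_
  unfold polyGrad
  exact (pev_cont _).prodMk (pev_cont _)

def polySub (α β γ : ℝ) : Submodule ℝ (Lp E3 2 (volume.restrict Ttri)) where
  carrier := {Z | ∃ q : Poly2, Z =ᵐ[volume.restrict Ttri] emb (rhoT α β γ) (pev q) (polyGrad q)}
  zero_mem' := by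
    refine ⟨0, ?_⟩
    filter_upwards [Lp.coeFn_zero E3 2 (volume.restrict Ttri)] with x hx
    rw [hx]
    ext i; fin_cases i <;> simp [emb, pev, polyGrad]
  add_mem' := by
    rintro Z Z' ⟨q, hq⟩ ⟨r, hr⟩
    refine ⟨q + r, ?_⟩
    filter_upwards [hq, hr, Lp.coeFn_add Z Z'] with x a b c
    rw [c, Pi.add_apply, a, b, ← emb_add]
    congr 1
    · ext x; simp [pev]
    · ext x <;> simp [pev, polyGrad]
  smul_mem' := by
    rintro c Z ⟨q, hq⟩
    refine ⟨c • q, ?_⟩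
    filter_upwards [hq, Lp.coeFn_smul c Z] with x a b
    rw [b, Pi.smul_apply, a, ← emb_smul]
    congr 1
    · ext x; simp [pev]
    · ext x <;> simp [pev, polyGrad]

def KK (α β γ : ℝ) : Submodule ℝ (Lp E3 2 (volume.restrict Ttri)) := (polySub α β γ).topologicalClosure

lemma dist_sq {u v : ℝ × ℝ → ℝ} {g h : ℝ × ℝ → ℝ × ℝ} (h1 : Good α β γ u g) (h2 : Good α β γ v h) :
    dist h1.2.2.toLp h2.2.2.toLp ^ 2 =
      (∫ x in Ttri, rhoT α β γ x * bilPhi q11 q12 q12 q22 x (g x - h x) (g x - h x)) +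
      ∫ x in Ttri, wt x * ((u x - v x) ^ 2 * rhoT α β γ x) := by
  have h3 := good_sub h1 h2
  have e : h1.2.2.toLp - h2.2.2.toLp = h3.2.2.toLp := by
    apply Lp.ext
    filter_upwards [h1.2.2.coeFn_toLp, h2.2.2.coeFn_toLp, h3.2.2.coeFn_toLp,
      Lp.coeFn_sub h1.2.2.toLp h2.2.2.toLp] with x a b c d
    rw [d, Pi.sub_apply, a, b, c, emb_sub]
  rw [dist_eq_norm, e, ← real_inner_self_eq_norm_sq, inner_toLp h3 h3]
  congr 2
  ext x
  ring

lemma memW_mem (hα : -1 < α) (hβ : -1 < β) (hγ : -1 < γ) {u : ℝ × ℝ → ℝ} {g : ℝ × ℝ → ℝ × ℝ}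
    (h : MemW Ttri (rhoT α β γ) q11 q12 q12 q22 u g) :
    ∃ hG : Good α β γ u g, hG.2.2.toLp ∈ KK α β γ := by
  have hG : Good α β γ u g := (good_iff u g).2 ⟨h.1, h.2.1.1⟩
  refine ⟨hG, ?_⟩
  change _ ∈ closure (polySub α β γ : Set (Lp E3 2 (volume.restrict Ttri)))
  rw [Metric.mem_closure_iff]
  intro ε hε
  obtain ⟨q, hq⟩ := h.2.2 (ε / 2) (by positivity)
  have hQ := good_poly hα hβ hγ q
  refine ⟨hQ.2.2.toLp, ⟨q, hQ.2.2.coeFn_toLp⟩, ?_⟩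
  refine lt_of_pow_lt_pow_left₀ 2 hε.le ?_
  rw [dist_sq hG hQ]
  have hS := (good_iff _ _).1 (good_sub hG hQ)
  have b1 : ∫ x in Ttri, wt x * ((u x - pev q x) ^ 2 * rhoT α β γ x) ≤
      ∫ x in Ttri, 4 * ((u x - pev q x) ^ 2 * rhoT α β γ x) := by
    refine integral_mono_of_nonneg ((ae_restrict_mem measT).mono fun x hx => ?_) (hS.1.2.const_mul 4)
      ((ae_restrict_mem measT).mono fun x hx => ?_)
    · have := rho_pos α β γ hx
      have := wt_pos x
      simp only [Pi.zero_apply]; positivity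
    · have := rho_pos α β γ hx
      exact mul_le_mul_of_nonneg_right (wt_le hx) (by positivity)
  rw [integral_const_mul] at b1
  have b2 : 0 ≤ ∫ x in Ttri, rhoT α β γ x * bilPhi q11 q12 q12 q22 x (g x - polyGrad q x) (g x - polyGrad q x) :=
    setIntegral_nonneg measT fun x hx => mul_nonneg (rho_pos α β γ hx).le (bil_nonneg hx _)
  nlinarith

lemma mem_memW (hα : -1 < α) (hβ : -1 < β) (hγ : -1 < γ) {Z : Lp E3 2 (volume.restrict Ttri)}
    (hZ : Z ∈ KK α β γ) : ∃ u g, ∃ hG : Good α β γ u g, hG.2.2.toLp = Z ∧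
      MemW Ttri (rhoT α β γ) q11 q12 q12 q22 u g := by
  have hρ := rho_meas α β γ
  have mZ : Measurable Z := (Lp.stronglyMeasurable Z).measurable
  have mZi : ∀ i, Measurable fun x => Z x i := fun i =>
    (measurable_pi_apply i).comp ((WithLp.measurable_ofLp 2 _).comp mZ)
  have := mZi 0
  have := mZi 1
  have := mZi 2
  have mw : Measurable wt := wt_cont.measurable
  let u : ℝ × ℝ → ℝ := fun x => Z x 0 / (√(rhoT α β γ x) * √(wt x))
  let g2 : ℝ × ℝ → ℝ := fun x => Z x 2 / (√(rhoT α β γ x) * √(x.2 * (1 - x.1 - x.2) / (1 - x.1)))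
  let g1 : ℝ × ℝ → ℝ := fun x => Z x 1 / (√(rhoT α β γ x) * √(x.1 * (1 - x.1))) + x.2 / (1 - x.1) * g2 x
  let g : ℝ × ℝ → ℝ × ℝ := fun x => (g1 x, g2 x)
  have mu : Measurable u := by fun_prop
  have mg2 : Measurable g2 := by fun_prop
  have mg1 : Measurable g1 := by fun_prop
  have mg : Measurable g := by fun_prop
  have hE : ∀ x ∈ Ttri, emb (rhoT α β γ) u g x = Z x := by
    intro x hx
    have hr := Real.sqrt_pos.2 (rho_pos α β γ hx)
    have hw := Real.sqrt_pos.2 (wt_pos x)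
    obtain ⟨h1, h2, h3⟩ := hx
    have h3 : 0 < 1 - x.1 - x.2 := by linarith
    have h4 : 0 < 1 - x.1 := by linarith
    have ha := Real.sqrt_pos.2 (mul_pos h1 h4)
    have hb := Real.sqrt_pos.2 (div_pos (mul_pos h2 h3) h4)
    ext i
    fin_cases i
    · simp only [emb, u, Matrix.cons_val, Fin.zero_eta]
      field_simp
    · simp only [emb, g, g1, add_sub_cancel_right, Fin.mk_one, Matrix.cons_val]
      generalize √(x.1 * (1 - x.1)) = a at *
      field_simp
    · simp only [emb, g, g2, Fin.reduceFinMk, Matrix.cons_val]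
      generalize √(x.2 * (1 - x.1 - x.2) / (1 - x.1)) = a at *
      field_simp
  have hae : emb (rhoT α β γ) u g =ᵐ[volume.restrict Ttri] Z := (ae_restrict_mem measT).mono hE
  have hG : Good α β γ u g := ⟨mu, mg, (memLp_congr_ae hae).2 (Lp.memLp Z)⟩
  have hGZ : hG.2.2.toLp = Z := Lp.ext (hG.2.2.coeFn_toLp.trans hae)
  have hL := (good_iff u g).1 hG
  refine ⟨u, g, hG, hGZ, hL.1, ⟨hL.2, ?_⟩, ?_⟩
  · intro v1 v2
    have hV : Good α β γ (fun x => Pdiv α β γ v1 v2 x / wt x) (fun x => (pev v1 x, pev v2 x)) := by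
      refine good_cont hα hβ hγ ((Pdiv_cont α β γ v1 v2).div wt_cont fun x => (wt_pos x).ne') ?_
      exact (pev_cont _).prodMk (pev_cont _)
    have key : KK α β γ ≤ (Submodule.span ℝ {hV.2.2.toLp})ᗮ := by
      refine Submodule.topologicalClosure_minimal _ ?_ (Submodule.isClosed_orthogonal _)
      rintro Y ⟨q, hq⟩
      rw [Submodule.mem_orthogonal_singleton_iff_inner_right]
      have hQ := good_poly hα hβ hγ q
      have : Y = hQ.2.2.toLp := Lp.ext (hq.trans hQ.2.2.coeFn_toLp.symm)
      rw [this, inner_toLp hV hQ, ← integral_add]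
      · rw [← weak_poly hα hβ hγ q v1 v2]
        congr 1
        ext x
        have := (wt_pos x).ne'
        field_simp
        ring
      · have := good_inner_int (good_right hV) (good_right hQ)
        simpa [IntegrableOn] using this
      · have := good_inner_int (good_left hV) (good_left hQ)
        simpa [bil_eq, IntegrableOn] using this
    have hz := key hZ
    rw [Submodule.mem_orthogonal_singleton_iff_inner_right, ← hGZ, inner_toLp hV hG] at hz
    rw [add_comm] at hz
    rw [← eq_neg_of_add_eq_zero_left hz]
    refine setIntegral_congr_fun measT fun x hx => ?_
    have := (wt_pos x).ne'
    simp only [div_eq α β γ v1 v2 hx]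
    field_simp
  · intro ε hε
    have hZ' : Z ∈ closure (polySub α β γ : Set _) := hZ
    rw [Metric.mem_closure_iff] at hZ'
    obtain ⟨Y, ⟨q, hq⟩, hd⟩ := hZ' ε hε
    refine ⟨q, ?_⟩
    have hQ := good_poly hα hβ hγ q
    have : Y = hQ.2.2.toLp := Lp.ext (hq.trans hQ.2.2.coeFn_toLp.symm)
    rw [this, ← hGZ] at hd
    have h2 := pow_lt_pow_left₀ hd dist_nonneg two_ne_zero
    rw [dist_sq hG hQ] at h2
    have hS := good_inner_int (good_left (good_sub hG hQ)) (good_left (good_sub hG hQ))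
    have b1 : ∫ x in Ttri, (u x - pev q x) ^ 2 * rhoT α β γ x ≤
        ∫ x in Ttri, wt x * ((u x - pev q x) ^ 2 * rhoT α β γ x) := by
      refine integral_mono_of_nonneg ((ae_restrict_mem measT).mono fun x hx => ?_) ?_
        ((ae_restrict_mem measT).mono fun x hx => ?_)
      · have := rho_pos α β γ hx
        simp only [Pi.zero_apply]; positivity
      · refine hS.congr (Eventually.of_forall fun x => ?_)
        simp [bil_eq]; ring
      · have := rho_pos α β γ hx
        exact le_mul_of_one_le_left (by positivity) (wt_ge x)
    linarith

end

/-- Existence and uniqueness (up to a.e. equality) of the weak solution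
of the degenerate Neumann problem on the triangle. -/
theorem weak_solution_exists_unique
    (α β γ : ℝ) (hα : -1 < α) (hβ : -1 < β) (hγ : -1 < γ)
    (f : ℝ × ℝ → ℝ) (hf : MemL2 Ttri (rhoT α β γ) f) :
    ∃ (u : ℝ × ℝ → ℝ) (g : ℝ × ℝ → ℝ × ℝ),
      MemW Ttri (rhoT α β γ) q11 q12 q12 q22 u g ∧
      (∀ (v : ℝ × ℝ → ℝ) (h : ℝ × ℝ → ℝ × ℝ),
        MemW Ttri (rhoT α β γ) q11 q12 q12 q22 v h →
          (∫ x in Ttri, rhoT α β γ x * bilPhi q11 q12 q12 q22 x (h x) (g x)) +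
              (∫ x in Ttri, (2 + x.1 ^ 2 + x.2 ^ 2) * u x * v x * rhoT α β γ x) =
            ∫ x in Ttri, v x * f x * rhoT α β γ x) ∧
      (∀ (u' : ℝ × ℝ → ℝ) (g' : ℝ × ℝ → ℝ × ℝ),
        MemW Ttri (rhoT α β γ) q11 q12 q12 q22 u' g' →
        (∀ (v : ℝ × ℝ → ℝ) (h : ℝ × ℝ → ℝ × ℝ),
          MemW Ttri (rhoT α β γ) q11 q12 q12 q22 v h →
            (∫ x in Ttri, rhoT α β γ x * bilPhi q11 q12 q12 q22 x (h x) (g' x)) +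
                (∫ x in Ttri, (2 + x.1 ^ 2 + x.2 ^ 2) * u' x * v x * rhoT α β γ x) =
              ∫ x in Ttri, v x * f x * rhoT α β γ x) →
        u' =ᵐ[volume.restrict Ttri] u) := by
  have hfw : MemL2 Ttri (rhoT α β γ) (fun x => f x / wt x) := by
    refine ⟨hf.1.div wt_cont.measurable, ?_⟩
    have m1 := hf.1
    have m2 := wt_cont.measurable
    have m3 := rho_meas α β γ
    refine Integrable.mono' hf.2 (by fun_prop) ((ae_restrict_mem measT).mono fun x hx => ?_)
    have hr := rho_pos α β γ hx
    rw [Real.norm_of_nonneg (by positivity)]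
    refine mul_le_mul_of_nonneg_right ?_ hr.le
    rw [div_pow]
    exact div_le_self (sq_nonneg _) (one_le_pow₀ (wt_ge x))
  have hF : Good α β γ (fun x => f x / wt x) (fun _ => 0) :=
    (good_iff _ _).2 ⟨hfw, measurable_const, by simp [bil_eq, IntegrableOn]⟩
  have hFi : ∀ (v : ℝ × ℝ → ℝ) (h : ℝ × ℝ → ℝ × ℝ) (hv : Good α β γ v h),
      inner ℝ hF.2.2.toLp hv.2.2.toLp = ∫ x in Ttri, v x * f x * rhoT α β γ x := by
    intro v h hv
    rw [inner_toLp hF hv]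
    have : ∀ x, wt x * (f x / wt x) * v x * rhoT α β γ x = v x * f x * rhoT α β γ x := by
      intro x
      have := (wt_pos x).ne'
      field_simp
    simp [this, bil_eq]
  have hclosed : IsClosed (KK α β γ : Set (Lp E3 2 (volume.restrict Ttri))) :=
    Submodule.isClosed_topologicalClosure _
  haveI : CompleteSpace (KK α β γ) := hclosed.completeSpace_coe
  obtain ⟨Z, hZ, Y, hY, hFZ⟩ := (KK α β γ).exists_add_mem_mem_orthogonal hF.2.2.toLp
  have hsol : ∀ V ∈ KK α β γ, inner ℝ Z V = inner ℝ hF.2.2.toLp V := by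
    intro V hV
    rw [hFZ, inner_add_left, Submodule.inner_left_of_mem_orthogonal hV hY, add_zero]
  obtain ⟨u, g, hG, hGZ, hW⟩ := mem_memW hα hβ hγ hZ
  refine ⟨u, g, hW, ?_, ?_⟩
  · intro v h hv
    obtain ⟨hv1, hv2⟩ := memW_mem hα hβ hγ hv
    have := hsol _ hv2
    rw [hFi v h hv1, ← hGZ, inner_toLp hG hv1] at this
    exact this
  · intro u' g' hW' hs'
    obtain ⟨hG', hK'⟩ := memW_mem hα hβ hγ hW'
    have hd : hG'.2.2.toLp - Z ∈ KK α β γ := Submodule.sub_mem _ hK' hZ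
    obtain ⟨v, h, hv, hvZ, hvW⟩ := mem_memW hα hβ hγ hd
    have e1 : inner ℝ hG'.2.2.toLp hv.2.2.toLp = inner ℝ hF.2.2.toLp hv.2.2.toLp := by
      rw [hFi v h hv, inner_toLp hG' hv]
      exact hs' v h hvW
    have e2 := hsol _ hd
    rw [hvZ] at e1
    have e3 : inner ℝ (hG'.2.2.toLp - Z) (hG'.2.2.toLp - Z) = (0 : ℝ) := by
      rw [inner_sub_left, e1, e2, sub_self]
    have e4 : hG'.2.2.toLp = hG.2.2.toLp := by
      rw [hGZ]; exact sub_eq_zero.1 (inner_self_eq_zero.1 e3)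
    have c1 := hG'.2.2.coeFn_toLp
    rw [e4] at c1
    filter_upwards [c1, hG.2.2.coeFn_toLp, ae_restrict_mem measT] with x a b hx
    have hr := Real.sqrt_pos.2 (rho_pos α β γ hx)
    have hw := Real.sqrt_pos.2 (wt_pos x)
    have := congrArg (fun z : E3 => z 0) (a.symm.trans b)
    simp only [emb, Matrix.cons_val] at this
    exact mul_left_cancel₀ hw.ne' (mul_left_cancel₀ hr.ne' this)
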